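/- For every 0 < ε < 1/8, the unique radially symmetric solution ū_ε of the Dirichlet problem satisfies, for all 0 < r < 1: |ū_ε(r)| ≤ 1/(2ε), |ū_ε'(r)| ≤ 1/(2ε), and |ū_ε''(r)| ≤ 3/(2ε²). -/

import Mathlib

open Real Set Metric

/-- The Euclidean Laplacian of `u : ℝ² → ℝ`. -/
noncomputable def laplacian2 (u : EuclideanSpace ℝ (Fin 2) → ℝ)
    (x : EuclideanSpace ℝ (Fin 2)) : ℝ :=
  ∑ i : Fin 2,
    fderiv ℝ (fun y => fderiv ℝ u y (EuclideanSpace.single i 1)) x (EuclideanSpace.single i 1)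

/-- `u` is a solution of the Dirichlet problem
`Δu = ε⁻²·(exp u − |x|²·exp (−u))` in `B₁(0)`, `u = 0` on `∂B₁(0)`. -/
def IsDirichletSol (ε : ℝ) (u : EuclideanSpace ℝ (Fin 2) → ℝ) : Prop :=
  ContinuousOn u (closedBall 0 1) ∧
  ContDiffOn ℝ (⊤ : ℕ∞) u (ball 0 1) ∧
  (∀ x ∈ ball (0 : EuclideanSpace ℝ (Fin 2)) 1,
    laplacian2 u x = (ε ^ 2)⁻¹ * (Real.exp (u x) - ‖x‖ ^ 2 * Real.exp (-u x))) ∧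
  (∀ x ∈ sphere (0 : EuclideanSpace ℝ (Fin 2)) 1, u x = 0)

/-!
The profile `g` of a radial solution satisfies `(r g')' = r ε⁻² (exp g - r² exp (-g))`. At a
negative interior minimum of `g - log` its second derivative would be negative, so `log ≤ g`;
hence the right-hand side is nonnegative, the flux `r g'` is nondecreasing from `0`, and `g`
increases to `g 1 = 0`.

Fix `r` and let `p = r g'(r)`. Past `r` the flux is at least `p`, so `g(r) ≤ p log r`, and
`log r ≤ g(r)` forces `p ≤ 1`. Before `r` the function `g` is at most `g(r)`, so integrating the
equation over `(0, r)` gives `p ≤ (r / 2ε)² (2 exp g(r) - r² exp (-g(r)))`. Multiplied by `p`, the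
second factor is at most `1` whenever `0 ≤ p ≤ 1` and `g(r) ≤ p log r`. Hence `p² ≤ (r / 2ε)²`,
that is, `g'(r) ≤ 1 / (2ε)`, and the remaining bounds follow by integration and from the equation.
-/

open Filter Topology

section SecondDerivativeTest

variable {f : ℝ → ℝ} {a b x : ℝ}

lemma deriv_deriv_nonneg_of_isLocalMin (h : IsLocalMin f a) (hf : ContinuousAt f a) :
    0 ≤ deriv (deriv f) a := by
  by_contra! hneg
  have hmax : IsLocalMax f a := isLocalMax_of_deriv_deriv_neg hneg h.deriv_eq_zero hf
  have hconst : f =ᶠ[𝓝 a] fun _ ↦ f a := by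
    filter_upwards [h, hmax] with y hmin hmax using le_antisymm hmax hmin
  have hzero : deriv (deriv f) a = 0 := by
    rw [hconst.deriv.deriv_eq]
    simp
  exact hneg.ne hzero

lemma nonneg_of_deriv_deriv_neg_of_neg (hf : ContinuousOn f (Icc a b)) (ha : 0 ≤ f a)
    (hb : 0 ≤ f b)
    (h : ∀ y ∈ Ioo a b, f y < 0 → deriv f y = 0 → deriv (deriv f) y < 0) (hx : x ∈ Icc a b) :
    0 ≤ f x := by
  obtain ⟨c, hc, hmin⟩ := isCompact_Icc.exists_isMinOn ⟨x, hx⟩ hf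
  suffices 0 ≤ f c from this.trans (hmin hx)
  by_contra! hneg
  have hac : a < c := hc.1.lt_of_ne fun hac ↦ by subst hac; exact hneg.not_ge ha
  have hcb : c < b := hc.2.lt_of_ne fun hcb ↦ by subst hcb; exact hneg.not_ge hb
  have hnhds : Icc a b ∈ 𝓝 c := Icc_mem_nhds hac hcb
  have hloc : IsLocalMin f c := hmin.isLocalMin hnhds
  exact (h c ⟨hac, hcb⟩ hneg hloc.deriv_eq_zero).not_ge
    (deriv_deriv_nonneg_of_isLocalMin hloc (hf.continuousAt hnhds))

end SecondDerivativeTest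

section RadialLaplacian

variable {E ι : Type*} [NormedAddCommGroup E] [InnerProductSpace ℝ E] [Fintype ι] {f : ℝ → ℝ}
  {f' : ℝ} {x : E}

lemma hasFDerivAt_comp_norm (hf : HasDerivAt f f' ‖x‖) (hx : x ≠ 0) :
    HasFDerivAt (fun y : E ↦ f ‖y‖) ((f' / ‖x‖) • innerSL ℝ x) x := by
  have hnorm : HasFDerivAt (fun y : E ↦ ‖y‖) (‖x‖⁻¹ • innerSL ℝ x) x := by
    have h := (hasStrictFDerivAt_norm_sq x).hasFDerivAt.sqrt (by positivity)
    simp only [Real.sqrt_sq (norm_nonneg _)] at h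
    convert h using 1
    ext v
    simp only [smul_apply, innerSL_apply_apply, smul_eq_mul, nsmul_eq_mul]
    push_cast
    field_simp
  refine (hf.comp_hasFDerivAt x hnorm).congr_fderiv ?_
  rw [smul_smul, div_eq_mul_inv]

lemma fderiv_fderiv_comp_norm (hf : ContDiffAt ℝ 2 f ‖x‖) (hx : x ≠ 0) (v : E) :
    fderiv ℝ (fun y ↦ fderiv ℝ (fun z : E ↦ f ‖z‖) y v) x v =
      (deriv (deriv f) ‖x‖ - deriv f ‖x‖ / ‖x‖) * (inner ℝ v x / ‖x‖) ^ 2 +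
        deriv f ‖x‖ / ‖x‖ * ‖v‖ ^ 2 := by
  have hx' : ‖x‖ ≠ 0 := norm_ne_zero_iff.2 hx
  have hdiff : ∀ᶠ y in 𝓝 x, DifferentiableAt ℝ f ‖y‖ :=
    continuous_norm.continuousAt.eventually <|
      (hf.eventually (by simp)).mono fun s hs ↦ hs.differentiableAt (by simp)
  have hgrad : (fun y ↦ fderiv ℝ (fun z : E ↦ f ‖z‖) y v) =ᶠ[𝓝 x]
      fun y ↦ deriv f ‖y‖ / ‖y‖ * inner ℝ v y := by
    filter_upwards [hdiff, isOpen_ne.mem_nhds hx] with y hy hy0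
    rw [(hasFDerivAt_comp_norm hy.hasDerivAt hy0).fderiv]
    simp [real_inner_comm]
  have hquot : HasDerivAt (fun s ↦ deriv f s / s)
      ((deriv (deriv f) ‖x‖ * ‖x‖ - deriv f ‖x‖ * 1) / ‖x‖ ^ 2) ‖x‖ :=
    ((hf.derivWithin le_rfl).differentiableAt one_ne_zero).hasDerivAt.div (hasDerivAt_id _) hx'
  have hinner : HasFDerivAt (fun y : E ↦ inner ℝ v y) (innerSL ℝ v) x :=
    (innerSL ℝ v).hasFDerivAt
  rw [hgrad.fderiv_eq, ((hasFDerivAt_comp_norm hquot hx).fun_mul hinner).fderiv]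
  simp only [add_apply, smul_apply, innerSL_apply_apply, smul_eq_mul,
    real_inner_self_eq_norm_sq, real_inner_comm v x]
  field_simp
  ring

lemma sum_fderiv_fderiv_comp_norm (b : OrthonormalBasis ι ℝ E) (hf : ContDiffAt ℝ 2 f ‖x‖)
    (hx : x ≠ 0) :
    ∑ i, fderiv ℝ (fun y ↦ fderiv ℝ (fun z : E ↦ f ‖z‖) y (b i)) x (b i) =
      deriv (deriv f) ‖x‖ + (Fintype.card ι - 1) * (deriv f ‖x‖ / ‖x‖) := by
  have hx' : ‖x‖ ≠ 0 := norm_ne_zero_iff.2 hx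
  simp only [fderiv_fderiv_comp_norm hf hx, div_pow, Finset.sum_add_distrib, ← Finset.mul_sum,
    ← Finset.sum_div, b.sum_sq_inner_right, b.norm_eq_one, one_pow, Finset.sum_const,
    Finset.card_univ, nsmul_eq_mul, mul_one]
  field_simp
  ring

lemma laplacian2_comp_norm {x : EuclideanSpace ℝ (Fin 2)} (hf : ContDiffAt ℝ 2 f ‖x‖)
    (hx : x ≠ 0) :
    laplacian2 (fun y ↦ f ‖y‖) x = deriv (deriv f) ‖x‖ + deriv f ‖x‖ / ‖x‖ := by
  have h := sum_fderiv_fderiv_comp_norm (EuclideanSpace.basisFun (Fin 2) ℝ) hf hx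
  simp only [EuclideanSpace.basisFun_apply, Fintype.card_fin] at h
  rw [laplacian2, h]
  norm_num

lemma laplacian2_congr {u w : EuclideanSpace ℝ (Fin 2) → ℝ} {x : EuclideanSpace ℝ (Fin 2)}
    (h : u =ᶠ[𝓝 x] w) : laplacian2 u x = laplacian2 w x :=
  Finset.sum_congr rfl fun i _ ↦ DFunLike.congr_fun
    (h.fderiv.fun_comp (· (EuclideanSpace.single i 1))).fderiv_eq (EuclideanSpace.single i 1)

end RadialLaplacian

section RadialFunctions

variable {E : Type*} [NormedAddCommGroup E] [NormedSpace ℝ E] [Nontrivial E] {u : E → ℝ}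
  {g : ℝ → ℝ} {R : ℝ} {n : WithTop ℕ∞}

lemma continuousOn_of_eq_comp_norm (hu : ContinuousOn u (closedBall 0 R))
    (hrad : ∀ x ∈ closedBall 0 R, u x = g ‖x‖) : ContinuousOn g (Icc 0 R) := by
  obtain ⟨e, he⟩ := exists_norm_eq E zero_le_one
  have hnorm : ∀ t ∈ Icc 0 R, ‖t • e‖ = t := fun t ht ↦ by
    rw [norm_smul, he, mul_one, norm_of_nonneg ht.1]
  have hmaps : MapsTo (fun t ↦ t • e) (Icc 0 R) (closedBall 0 R) := fun t ht ↦
    mem_closedBall_zero_iff.2 ((hnorm t ht).trans_le ht.2)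
  refine (hu.comp (by fun_prop) hmaps).congr fun t ht ↦ ?_
  rw [Function.comp_apply, hrad _ (hmaps ht), hnorm t ht]

-- The witness is the restriction of `u` to a line through the origin, the even extension of `g`.
lemma exists_contDiffOn_eqOn_of_eq_comp_norm (hu : ContDiffOn ℝ n u (ball 0 R))
    (hrad : ∀ x ∈ ball 0 R, u x = g ‖x‖) :
    ∃ φ : ℝ → ℝ, ContDiffOn ℝ n φ (Ioo (-R) R) ∧ EqOn g φ (Ico 0 R) := by
  obtain ⟨e, he⟩ := exists_norm_eq E zero_le_one
  have hnorm : ∀ t : ℝ, ‖t • e‖ = |t| := fun t ↦ by rw [norm_smul, he, mul_one, norm_eq_abs]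
  refine ⟨fun t ↦ u (t • e), hu.comp (by fun_prop) fun t ht ↦ ?_, fun t ht ↦ ?_⟩
  · rwa [mem_ball_zero_iff, hnorm, abs_lt]
  · have ht' : |t| = t := abs_of_nonneg ht.1
    simp only [hrad (t • e) (by rw [mem_ball_zero_iff, hnorm, ht']; exact ht.2), hnorm, ht']

end RadialFunctions

section ScalarInequalities

variable {p r x : ℝ}

lemma sq_mul_exp_neg_le_exp_iff (hr : 0 < r) : r ^ 2 * exp (-x) ≤ exp x ↔ log r ≤ x := by
  rw [exp_neg, ← div_eq_mul_inv, div_le_iff₀ (exp_pos x), ← sq,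
    pow_le_pow_iff_left₀ hr.le (exp_pos x).le two_ne_zero, log_le_iff_le_exp hr]

lemma mul_two_mul_exp_sub_le_one (hp₀ : 0 ≤ p) (hp₁ : p ≤ 1) (hr₀ : 0 < r) (hr₁ : r ≤ 1)
    (hx : x ≤ p * log r) : p * (2 * exp x - r ^ 2 * exp (-x)) ≤ 1 := by
  have hx₀ : x ≤ 0 := hx.trans (mul_nonpos_of_nonneg_of_nonpos hp₀ (log_nonpos hr₀.le hr₁))
  rcases le_total p (1 / 2) with hp | hp
  · have hexp : 2 * exp x - r ^ 2 * exp (-x) ≤ 2 := by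
      have : 0 ≤ r ^ 2 * exp (-x) := by positivity
      linarith [exp_le_one_iff.2 hx₀]
    linarith [mul_le_mul_of_nonneg_left hexp hp₀]
  · have hfactor : r ^ 2 * exp (-x) = exp x * exp (2 * (log r - x)) := by
      rw [← exp_add, show x + 2 * (log r - x) = log r + log r + -x by ring, exp_add, exp_add,
        exp_log hr₀, sq]
    calc p * (2 * exp x - r ^ 2 * exp (-x))
        = exp x * (p * (2 - exp (2 * (log r - x)))) := by rw [hfactor]; ring
      _ ≤ exp x * (p * (2 - (2 * (log r - x) + 1))) := by
          gcongr
          exact add_one_le_exp _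
      _ ≤ exp x * (-x + 1) := by
          gcongr
          nlinarith
      _ ≤ exp x * exp (-x) := by
          gcongr
          exact add_one_le_exp _
      _ = 1 := by rw [← exp_add, add_neg_cancel, exp_zero]

end ScalarInequalities

/-- Radial profiles `g(|x|)` of solutions of the Dirichlet problem, characterised by an ordinary
differential equation on `(0, 1)`. Values of `g` outside `[0, 1]` carry no information, so that
regularity of the solution at the origin is expressed through the flux `r * g'(r)`, which has to
tend to `0` there. -/
structure IsRadialProfile (ε : ℝ) (g : ℝ → ℝ) : Prop where
  continuousOn : ContinuousOn g (Icc 0 1)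
  contDiffOn : ContDiffOn ℝ 2 g (Ioo 0 1)
  continuousOn_flux : ContinuousOn (fun r ↦ r * deriv g r) (Ico 0 1)
  deriv_deriv_add : ∀ r ∈ Ioo (0 : ℝ) 1,
    deriv (deriv g) r + deriv g r / r = (ε ^ 2)⁻¹ * (exp (g r) - r ^ 2 * exp (-g r))
  apply_one : g 1 = 0

namespace IsRadialProfile

variable {ε r : ℝ} {g : ℝ → ℝ}

lemma contDiffAt (h : IsRadialProfile ε g) (hr : r ∈ Ioo 0 1) : ContDiffAt ℝ 2 g r :=
  h.contDiffOn.contDiffAt (Ioo_mem_nhds hr.1 hr.2)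

lemma hasDerivAt (h : IsRadialProfile ε g) (hr : r ∈ Ioo 0 1) : HasDerivAt g (deriv g r) r :=
  ((h.contDiffAt hr).differentiableAt two_ne_zero).hasDerivAt

lemma hasDerivAt_deriv (h : IsRadialProfile ε g) (hr : r ∈ Ioo 0 1) :
    HasDerivAt (deriv g) (deriv (deriv g) r) r :=
  (((h.contDiffAt hr).derivWithin le_rfl).differentiableAt one_ne_zero).hasDerivAt

lemma hasDerivAt_flux (h : IsRadialProfile ε g) (hr : r ∈ Ioo 0 1) :
    HasDerivAt (fun s ↦ s * deriv g s)
      (r * ((ε ^ 2)⁻¹ * (exp (g r) - r ^ 2 * exp (-g r)))) r := by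
  have hr₀ : r ≠ 0 := hr.1.ne'
  refine ((hasDerivAt_id r).mul (h.hasDerivAt_deriv hr)).congr_deriv ?_
  rw [← h.deriv_deriv_add r hr, id]
  field_simp
  ring

lemma hasDerivAt_sub_const_mul_log (h : IsRadialProfile ε g) (hr : r ∈ Ioo 0 1) (c : ℝ) :
    HasDerivAt (fun s ↦ g s - c * log s) (deriv g r - c * r⁻¹) r :=
  (h.hasDerivAt hr).sub ((hasDerivAt_log hr.1.ne').const_mul c)

lemma continuousOn_sub_const_mul_log (h : IsRadialProfile ε g) (hr : 0 < r) (c : ℝ) :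
    ContinuousOn (fun s ↦ g s - c * log s) (Icc r 1) :=
  (h.continuousOn.mono (Icc_subset_Icc_left hr.le)).sub <|
    continuousOn_const.mul <| continuousOn_log.mono fun _ hs ↦ (hr.trans_le hs.1).ne'

lemma deriv_deriv_sub_log (h : IsRadialProfile ε g) (hr : r ∈ Ioo 0 1) :
    deriv (deriv fun s ↦ g s - log s) r = deriv (deriv g) r + (r ^ 2)⁻¹ := by
  have hderiv : (deriv fun s ↦ g s - log s) =ᶠ[𝓝 r] fun s ↦ deriv g s - s⁻¹ := by
    filter_upwards [Ioo_mem_nhds hr.1 hr.2] with s hs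
    simpa using (h.hasDerivAt_sub_const_mul_log hs 1).deriv
  rw [hderiv.deriv_eq, ((h.hasDerivAt_deriv hr).fun_sub (hasDerivAt_inv hr.1.ne')).deriv,
    sub_neg_eq_add]

lemma log_le (h : IsRadialProfile ε g) (hε : ε ≠ 0) (hr : r ∈ Ioo 0 1) : log r ≤ g r := by
  obtain ⟨M, hM⟩ := isCompact_Icc.bddBelow_image h.continuousOn
  let δ := min r (exp M)
  have hδ₀ : 0 < δ := lt_min hr.1 (exp_pos M)
  have hδr : δ ≤ r := min_le_left _ _
  have hlogδ : log δ ≤ g δ := ((log_le_iff_le_exp hδ₀).2 (min_le_right _ _)).trans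
    (hM ⟨δ, ⟨hδ₀.le, hδr.trans hr.2.le⟩, rfl⟩)
  refine sub_nonneg.1 <| nonneg_of_deriv_deriv_neg_of_neg (f := fun s ↦ g s - log s)
    (by simpa using h.continuousOn_sub_const_mul_log hδ₀ 1) (sub_nonneg.2 hlogδ)
    (by simp [h.apply_one]) (fun s hs hneg hcrit ↦ ?_) ⟨hδr, hr.2.le⟩
  have hs' : s ∈ Ioo (0 : ℝ) 1 := ⟨hδ₀.trans hs.1, hs.2⟩
  have hderiv : deriv g s = s⁻¹ := by
    have := (h.hasDerivAt_sub_const_mul_log hs' 1).deriv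
    simp only [one_mul] at this
    linarith
  have hquot : deriv g s / s = (s ^ 2)⁻¹ := by
    rw [hderiv, sq, mul_inv, div_eq_mul_inv]
  have hsource : exp (g s) < s ^ 2 * exp (-g s) :=
    not_le.1 fun hle ↦ hneg.not_ge (sub_nonneg.2 ((sq_mul_exp_neg_le_exp_iff hs'.1).1 hle))
  rw [h.deriv_deriv_sub_log hs', ← hquot, h.deriv_deriv_add s hs']
  exact mul_neg_of_pos_of_neg (by positivity) (sub_neg.2 hsource)

lemma source_nonneg (h : IsRadialProfile ε g) (hε : ε ≠ 0) (hr : r ∈ Ioo 0 1) :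
    0 ≤ (ε ^ 2)⁻¹ * (exp (g r) - r ^ 2 * exp (-g r)) :=
  mul_nonneg (by positivity) <|
    sub_nonneg.2 <| (sq_mul_exp_neg_le_exp_iff hr.1).2 <| h.log_le hε hr

lemma monotoneOn_flux (h : IsRadialProfile ε g) (hε : ε ≠ 0) :
    MonotoneOn (fun r ↦ r * deriv g r) (Ico 0 1) := by
  refine monotoneOn_of_hasDerivWithinAt_nonneg (convex_Ico 0 1) h.continuousOn_flux
    (f' := fun r ↦ r * ((ε ^ 2)⁻¹ * (exp (g r) - r ^ 2 * exp (-g r))))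
    (fun r hr ↦ ?_) (fun r hr ↦ ?_) <;> rw [interior_Ico] at hr
  · exact (h.hasDerivAt_flux hr).hasDerivWithinAt
  · exact mul_nonneg hr.1.le (h.source_nonneg hε hr)

lemma flux_nonneg (h : IsRadialProfile ε g) (hε : ε ≠ 0) (hr : r ∈ Ioo 0 1) :
    0 ≤ r * deriv g r := by
  simpa using h.monotoneOn_flux hε (left_mem_Ico.2 one_pos) (Ioo_subset_Ico_self hr) hr.1.le

lemma deriv_nonneg (h : IsRadialProfile ε g) (hε : ε ≠ 0) (hr : r ∈ Ioo 0 1) : 0 ≤ deriv g r :=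
  nonneg_of_mul_nonneg_right (h.flux_nonneg hε hr) hr.1

lemma monotoneOn (h : IsRadialProfile ε g) (hε : ε ≠ 0) : MonotoneOn g (Icc 0 1) := by
  refine monotoneOn_of_hasDerivWithinAt_nonneg (convex_Icc 0 1) h.continuousOn (f' := deriv g)
    (fun r hr ↦ ?_) (fun r hr ↦ ?_) <;> rw [interior_Icc] at hr
  · exact (h.hasDerivAt hr).hasDerivWithinAt
  · exact h.deriv_nonneg hε hr

lemma nonpos (h : IsRadialProfile ε g) (hε : ε ≠ 0) (hr : r ∈ Ioo 0 1) : g r ≤ 0 :=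
  h.apply_one ▸ h.monotoneOn hε (Ioo_subset_Icc_self hr) (right_mem_Icc.2 zero_le_one) hr.2.le

lemma le_flux_mul_log (h : IsRadialProfile ε g) (hε : ε ≠ 0) (hr : r ∈ Ioo 0 1) :
    g r ≤ r * deriv g r * log r := by
  have hmono : MonotoneOn (fun s ↦ g s - r * deriv g r * log s) (Icc r 1) := by
    refine monotoneOn_of_hasDerivWithinAt_nonneg (convex_Icc r 1)
      (h.continuousOn_sub_const_mul_log hr.1 _) (f' := fun s ↦ deriv g s - r * deriv g r * s⁻¹)
      (fun s hs ↦ ?_) (fun s hs ↦ ?_) <;> rw [interior_Icc] at hs <;>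
      have hs' : s ∈ Ioo (0 : ℝ) 1 := ⟨hr.1.trans hs.1, hs.2⟩
    · exact (h.hasDerivAt_sub_const_mul_log hs' _).hasDerivWithinAt
    · have hflux : r * deriv g r ≤ s * deriv g s :=
        h.monotoneOn_flux hε (Ioo_subset_Ico_self hr) (Ioo_subset_Ico_self hs') hs.1.le
      rwa [sub_nonneg, ← div_eq_mul_inv, div_le_iff₀' hs'.1]
  have hle := hmono (left_mem_Icc.2 hr.2.le) (right_mem_Icc.2 hr.2.le) hr.2.le
  simpa [h.apply_one] using hle

lemma flux_le_one (h : IsRadialProfile ε g) (hε : ε ≠ 0) (hr : r ∈ Ioo 0 1) :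
    r * deriv g r ≤ 1 := by
  have hlog : 1 * log r ≤ r * deriv g r * log r := by
    simpa using (h.log_le hε hr).trans (h.le_flux_mul_log hε hr)
  exact (mul_le_mul_right_of_neg (log_neg hr.1 hr.2)).1 hlog

lemma flux_le (h : IsRadialProfile ε g) (hε : ε ≠ 0) (hr : r ∈ Ioo 0 1) :
    r * deriv g r ≤ (r / (2 * ε)) ^ 2 * (2 * exp (g r) - r ^ 2 * exp (-g r)) := by
  have hmono : MonotoneOn
      (fun s ↦ (s / (2 * ε)) ^ 2 * (2 * exp (g r) - s ^ 2 * exp (-g r)) - s * deriv g s)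
      (Icc 0 r) := by
    refine monotoneOn_of_hasDerivWithinAt_nonneg (convex_Icc 0 r)
      (f' := fun s ↦ s * ((ε ^ 2)⁻¹ * (exp (g r) - s ^ 2 * exp (-g r))) -
        s * ((ε ^ 2)⁻¹ * (exp (g s) - s ^ 2 * exp (-g s))))
      ?_ (fun s hs ↦ ?_) (fun s hs ↦ ?_)
    · exact (by fun_prop : Continuous _).continuousOn.sub
        (h.continuousOn_flux.mono (Icc_subset_Ico_right hr.2))
    all_goals
      rw [interior_Icc] at hs
      have hs' : s ∈ Ioo (0 : ℝ) 1 := ⟨hs.1, hs.2.trans hr.2⟩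
    · have hbound : HasDerivAt
          (fun s ↦ (s / (2 * ε)) ^ 2 * (2 * exp (g r) - s ^ 2 * exp (-g r)))
          (s * ((ε ^ 2)⁻¹ * (exp (g r) - s ^ 2 * exp (-g r)))) s := by
        refine ((((hasDerivAt_id s).div_const (2 * ε)).pow 2).mul
          (((hasDerivAt_pow 2 s).mul_const (exp (-g r))).const_sub (2 * exp (g r)))).congr_deriv ?_
        simp only [id, Pi.pow_apply, Nat.cast_ofNat, Nat.add_one_sub_one, pow_one]
        field_simp
        ring
      exact (hbound.sub (h.hasDerivAt_flux hs')).hasDerivWithinAt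
    · have hle : g s ≤ g r :=
        h.monotoneOn hε (Ioo_subset_Icc_self hs') (Ioo_subset_Icc_self hr) hs.2.le
      have := hs.1.le
      rw [sub_nonneg]
      gcongr
  simpa using hmono (left_mem_Icc.2 hr.1.le) (right_mem_Icc.2 hr.1.le) hr.1.le

lemma deriv_div_le (h : IsRadialProfile ε g) (hε : ε ≠ 0) (hr : r ∈ Ioo 0 1) :
    deriv g r / r ≤ (ε ^ 2)⁻¹ / 2 := by
  have hr₀ := hr.1
  rw [← mul_le_mul_iff_right₀ (pow_pos hr₀ 2)]
  calc r ^ 2 * (deriv g r / r) = r * deriv g r := by field_simp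
    _ ≤ (r / (2 * ε)) ^ 2 * (2 * exp (g r) - r ^ 2 * exp (-g r)) := h.flux_le hε hr
    _ ≤ (r / (2 * ε)) ^ 2 * 2 := by
        gcongr
        have : 0 ≤ r ^ 2 * exp (-g r) := by positivity
        linarith [exp_le_one_iff.2 (h.nonpos hε hr)]
    _ = r ^ 2 * ((ε ^ 2)⁻¹ / 2) := by field_simp

lemma deriv_le (h : IsRadialProfile ε g) (hε : 0 < ε) (hr : r ∈ Ioo 0 1) :
    deriv g r ≤ 1 / (2 * ε) := by
  have hr₀ := hr.1
  have hp₀ := h.flux_nonneg hε.ne' hr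
  have hsq : (r * deriv g r) ^ 2 ≤ (r / (2 * ε)) ^ 2 :=
    calc (r * deriv g r) ^ 2
        ≤ r * deriv g r * ((r / (2 * ε)) ^ 2 * (2 * exp (g r) - r ^ 2 * exp (-g r))) := by
          rw [sq]
          exact mul_le_mul_of_nonneg_left (h.flux_le hε.ne' hr) hp₀
      _ = (r / (2 * ε)) ^ 2 * (r * deriv g r * (2 * exp (g r) - r ^ 2 * exp (-g r))) := by ring
      _ ≤ (r / (2 * ε)) ^ 2 := mul_le_of_le_one_right (sq_nonneg _) <|
          mul_two_mul_exp_sub_le_one hp₀ (h.flux_le_one hε.ne' hr) hr₀ hr.2.le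
            (h.le_flux_mul_log hε.ne' hr)
  have hflux : r * deriv g r ≤ r / (2 * ε) := le_of_sq_le_sq hsq (by positivity)
  rw [div_eq_mul_one_div] at hflux
  exact le_of_mul_le_mul_left hflux hr₀

lemma abs_deriv_le (h : IsRadialProfile ε g) (hε : 0 < ε) (hr : r ∈ Ioo 0 1) :
    |deriv g r| ≤ 1 / (2 * ε) := by
  rw [abs_of_nonneg (h.deriv_nonneg hε.ne' hr)]
  exact h.deriv_le hε hr

lemma abs_apply_le (h : IsRadialProfile ε g) (hε : 0 < ε) (hr : r ∈ Ioo 0 1) :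
    |g r| ≤ 1 / (2 * ε) := by
  have hinterior : interior (Icc (0 : ℝ) 1) = Ioo 0 1 := interior_Icc
  have hmean : g 1 - g r ≤ 1 / (2 * ε) * (1 - r) :=
    (convex_Icc 0 1).image_sub_le_mul_sub_of_deriv_le h.continuousOn
      (fun s hs ↦ (h.hasDerivAt (hinterior ▸ hs)).differentiableAt.differentiableWithinAt)
      (fun s hs ↦ h.deriv_le hε (hinterior ▸ hs)) r (Ioo_subset_Icc_self hr) 1
      (right_mem_Icc.2 zero_le_one) hr.2.le
  rw [abs_of_nonpos (h.nonpos hε.ne' hr)]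
  calc -g r = g 1 - g r := by rw [h.apply_one, zero_sub]
    _ ≤ 1 / (2 * ε) * (1 - r) := hmean
    _ ≤ 1 / (2 * ε) := mul_le_of_le_one_right (by positivity) (by linarith [hr.1])

lemma abs_deriv_deriv_le (h : IsRadialProfile ε g) (hε : ε ≠ 0) (hr : r ∈ Ioo 0 1) :
    |deriv (deriv g) r| ≤ 1 / ε ^ 2 := by
  have hquot₀ : 0 ≤ deriv g r / r := div_nonneg (h.deriv_nonneg hε hr) hr.1.le
  have hquot := h.deriv_div_le hε hr
  have hsource₀ := h.source_nonneg hε hr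
  have hsource : (ε ^ 2)⁻¹ * (exp (g r) - r ^ 2 * exp (-g r)) ≤ (ε ^ 2)⁻¹ := by
    refine mul_le_of_le_one_right (by positivity) ?_
    have : 0 ≤ r ^ 2 * exp (-g r) := by positivity
    linarith [exp_le_one_iff.2 (h.nonpos hε hr)]
  have hode := h.deriv_deriv_add r hr
  rw [one_div, abs_le]
  constructor <;> linarith

end IsRadialProfile

lemma IsDirichletSol.isRadialProfile {ε : ℝ} {u : EuclideanSpace ℝ (Fin 2) → ℝ} {g : ℝ → ℝ}
    (hu : IsDirichletSol ε u) (hrad : ∀ x ∈ closedBall 0 1, u x = g ‖x‖) :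
    IsRadialProfile ε g := by
  obtain ⟨hcont, hsmooth, hpde, hbdry⟩ := hu
  obtain ⟨φ, hφ, hgφ⟩ := exists_contDiffOn_eqOn_of_eq_comp_norm
    (contDiffOn_infty.1 hsmooth 2) fun x hx ↦ hrad x (ball_subset_closedBall hx)
  have hg : ContDiffOn ℝ 2 g (Ioo 0 1) :=
    (hφ.mono (Ioo_subset_Ioo_left (by simp))).congr fun r hr ↦
      hgφ (Ioo_subset_Ico_self hr)
  refine ⟨continuousOn_of_eq_comp_norm hcont hrad, hg, ?_, fun r hr ↦ ?_, ?_⟩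
  · have hφ' : ContinuousOn (deriv φ) (Ico 0 1) :=
      (hφ.continuousOn_deriv_of_isOpen isOpen_Ioo one_le_two).mono fun r hr ↦
        ⟨by linarith [hr.1], hr.2⟩
    refine (continuousOn_id.mul hφ').congr fun r hr ↦ ?_
    rcases hr.1.eq_or_lt with rfl | hr₀
    · simp
    · have hderiv : deriv g r = deriv φ r := EventuallyEq.deriv_eq <| by
        filter_upwards [Ioo_mem_nhds hr₀ hr.2] with s hs using hgφ (Ioo_subset_Ico_self hs)
      simp [hderiv]
  · obtain ⟨x, rfl⟩ := exists_norm_eq (EuclideanSpace ℝ (Fin 2)) hr.1.le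
    have hball : x ∈ ball 0 1 := mem_ball_zero_iff.2 hr.2
    have heq : u =ᶠ[𝓝 x] fun y ↦ g ‖y‖ := by
      filter_upwards [isOpen_ball.mem_nhds hball] with y hy
        using hrad y (ball_subset_closedBall hy)
    rw [← laplacian2_comp_norm (hg.contDiffAt (Ioo_mem_nhds hr.1 hr.2)) (norm_pos_iff.1 hr.1),
      ← laplacian2_congr heq, hpde x hball, heq.eq_of_nhds]
  · obtain ⟨x, hx⟩ := exists_norm_eq (EuclideanSpace ℝ (Fin 2)) zero_le_one
    rw [← hx, ← hrad x (by simp [hx]), hbdry x (by simp [hx])]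

theorem stmt_10_general (ε : ℝ) (hε : 0 < ε) (u : EuclideanSpace ℝ (Fin 2) → ℝ) (g : ℝ → ℝ)
    (hu : IsDirichletSol ε u)
    (hrad : ∀ x ∈ closedBall (0 : EuclideanSpace ℝ (Fin 2)) 1, u x = g ‖x‖) :
    ∀ r ∈ Ioo (0 : ℝ) 1,
      |g r| ≤ 1 / (2 * ε) ∧ |deriv g r| ≤ 1 / (2 * ε) ∧ |deriv (deriv g) r| ≤ 1 / ε ^ 2 :=
  have h := hu.isRadialProfile hrad
  fun _ hr ↦ ⟨h.abs_apply_le hε hr, h.abs_deriv_le hε hr, h.abs_deriv_deriv_le hε.ne' hr⟩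

/-- for `0 < ε < 1/8`, the unique radially symmetric solution `ū_ε`
(with radial profile `g`) satisfies, for all `0 < r < 1`:
`|ū_ε(r)| ≤ 1/(2ε)`, `|ū_ε'(r)| ≤ 1/(2ε)`, and `|ū_ε''(r)| ≤ 3/(2ε²)`. -/
theorem stmt_10 (ε : ℝ) (hε : 0 < ε) (hε8 : ε < 1/8)
    (u : EuclideanSpace ℝ (Fin 2) → ℝ) (g : ℝ → ℝ)
    (hu : IsDirichletSol ε u)
    (hrad : ∀ x ∈ closedBall (0 : EuclideanSpace ℝ (Fin 2)) 1, u x = g ‖x‖) :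
    ∀ r ∈ Ioo (0 : ℝ) 1,
      |g r| ≤ 1 / (2 * ε) ∧
      |deriv g r| ≤ 1 / (2 * ε) ∧
      |deriv (deriv g) r| ≤ 3 / (2 * ε ^ 2) := by
  intro r hr
  obtain ⟨hg, hg', hg''⟩ := stmt_10_general ε hε u g hu hrad r hr
  exact ⟨hg, hg', hg''.trans (by rw [← mul_div_mul_left 1 _ two_ne_zero]; gcongr; norm_num)⟩
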